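/- Let r and k be integers with r > 2 and k ≥ 1. Then for all integers b with 2 ≤ b ≤ r-1 and all integers x with 1 ≤ x ≤ k, one has (b·k·(r-1) + x) mod (r·k) ≠ k. -/

import Mathlib

/-- For integers r > 2, k ≥ 1, 2 ≤ b ≤ r-1 and 1 ≤ x ≤ k, one has
(b·k·(r-1) + x) mod (r·k) ≠ k. -/
theorem mod_ne_k (r k : ℕ) (hr : 2 < r) (hk : 1 ≤ k) :
    ∀ b x : ℕ, 2 ≤ b → b ≤ r - 1 → 1 ≤ x → x ≤ k →
      (b * k * (r - 1) + x) % (r * k) ≠ k := by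
  intro b x hb hbr hx hxk
  obtain ⟨a, rfl⟩ : ∃ a, b = a + 1 := ⟨b - 1, by omega⟩
  obtain ⟨c, rfl⟩ : ∃ c, r = a + 1 + c := ⟨r - (a + 1), by omega⟩
  have hc : 1 ≤ c := by omega
  have ha : 1 ≤ a := by omega
  -- With `c = r - b`, the remainder is `c * k + x`, which exceeds `k` since `c, x ≥ 1`.
  have key : (a + 1) * k * (a + 1 + c - 1) + x
      = (c * k + x) + ((a + 1 + c) * k) * a := by
    rw [show a + 1 + c - 1 = a + c by omega]
    ring
  have hlt : c * k + x < (a + 1 + c) * k := by nlinarith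
  rw [key, Nat.add_mul_mod_self_left, Nat.mod_eq_of_lt hlt]
  nlinarith
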